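/- arXiv:0711.3159 — 2 statements merged into one kernel-verified Lean document; each statement's English description precedes it below -/
import Mathlib

section
/- Suppose the real numbers 1, α, β are rationally independent. Then for every polynomial p with real coefficients of degree at most 2, one has lim_{N→∞} (1/N)·Σ_{n=1}^N e(⌊n·α⌋·n·β + p(n)) = 0. -/
open Filter MeasureTheory

/-- `e(x) = exp(2πix)`. -/
noncomputable def eFun (x : ℝ) : ℂ := Complex.exp (2 * Real.pi * Complex.I * x)

/-!
By van der Corput's lemma it is enough that, for every large shift `h`, the correlations
`e(φ (n + h) - φ n)` of the phase `φ n = ⌊nα⌋nβ + p(n)` average to zero. The carry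
`m = ⌊{nα} + hα⌋` takes only the values `⌊hα⌋` and `⌊hα⌋ + 1`, and once it is fixed the difference
`φ (n + h) - φ n` is linear in `n` up to the term `-hβ{nα}`, with frequency
`θ = mβ + h(αβ + 2a)`, where `a` is the coefficient of `n ^ 2` in `p`. A correlation is thus a
sum of two sequences `e(nθ) f({nα})` with `f` piecewise continuous, and these average to zero by
Weyl's theorem as soon as `θ` is not in `ℤ + ℤα`. If `θ` and `θ'` are both in `ℤ + ℤα`, for the
pairs `(h, m)` and `(h', m')`, eliminating `αβ + 2a` and using independence gives
`m / h = m' / h'`; as `m / h` tends to the irrational number `α`, this is impossible for large `h`.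
-/

open Asymptotics Finset Topology
open scoped ComplexConjugate FourierTransform Polynomial

section MeanZero

variable {E : Type*} [NormedAddCommGroup E] {u v : ℕ → E}

/-- The averages `(u 0 + ⋯ + u (N - 1)) / N` tend to zero. Comparing the partial sums with `N` by
`=o` avoids both the division by `N = 0` and a choice of scalars. -/
def MeanZero (u : ℕ → E) : Prop :=
  (fun N ↦ ∑ n ∈ range N, u n) =o[atTop] fun N : ℕ ↦ (N : ℝ)

theorem meanZero_iff :
    MeanZero u ↔ ∀ ε : ℝ, 0 < ε → ∀ᶠ N : ℕ in atTop, ‖∑ n ∈ range N, u n‖ ≤ ε * N := by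
  simp only [MeanZero, isLittleO_iff, RCLike.norm_natCast]

theorem MeanZero.add (hu : MeanZero u) (hv : MeanZero v) : MeanZero fun n ↦ u n + v n := by
  simpa only [MeanZero, sum_add_distrib] using IsLittleO.add hu hv

theorem MeanZero.sum {ι : Type*} {s : Finset ι} {u : ι → ℕ → E}
    (hu : ∀ i ∈ s, MeanZero (u i)) : MeanZero fun n ↦ ∑ i ∈ s, u i n := by
  simpa only [MeanZero, sum_comm (t := s)] using IsLittleO.fun_sum hu

theorem MeanZero.const_mul {R : Type*} [NormedRing R] {u : ℕ → R} (hu : MeanZero u) (c : R) :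
    MeanZero fun n ↦ c * u n := by
  simpa only [MeanZero, mul_sum] using IsLittleO.const_mul_left hu c

theorem MeanZero.conj {𝕜 : Type*} [RCLike 𝕜] {u : ℕ → 𝕜} (hu : MeanZero u) :
    MeanZero fun n ↦ conj (u n) := by
  simpa only [meanZero_iff, ← map_sum, RCLike.norm_conj] using hu

theorem meanZero_of_norm_sum_le {C : ℝ} (hC : ∀ N, ‖∑ n ∈ range N, u n‖ ≤ C) : MeanZero u :=
  (IsBigO.of_bound C (.of_forall fun N ↦ by simpa using hC N)).trans_isLittleO
    ((isLittleO_const_left (c := (1 : ℝ))).2 <| .inr <|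
      tendsto_norm_atTop_atTop.comp tendsto_natCast_atTop_atTop)

theorem meanZero_of_approx
    (h : ∀ ε : ℝ, 0 < ε → ∃ v, MeanZero v ∧
      ∀ᶠ N : ℕ in atTop, ∑ n ∈ range N, ‖u n - v n‖ ≤ ε * N) : MeanZero u := by
  refine meanZero_iff.2 fun ε hε ↦ ?_
  obtain ⟨v, hv, huv⟩ := h (ε / 2) (half_pos hε)
  filter_upwards [meanZero_iff.1 hv (ε / 2) (half_pos hε), huv] with N hvN huvN
  calc ‖∑ n ∈ range N, u n‖
      = ‖∑ n ∈ range N, (u n - v n) + ∑ n ∈ range N, v n‖ := by simp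
    _ ≤ ∑ n ∈ range N, ‖u n - v n‖ + ‖∑ n ∈ range N, v n‖ :=
      (norm_add_le _ _).trans (by gcongr; exact norm_sum_le _ _)
    _ ≤ ε * N := by linarith

theorem sum_range_shift_sub {G : Type*} [AddCommGroup G] (u : ℕ → G) (k N : ℕ) :
    ∑ n ∈ range N, (u (n + k) - u n) = ∑ n ∈ range k, u (N + n) - ∑ n ∈ range k, u n := by
  rw [sum_sub_distrib, sub_eq_sub_iff_add_eq_add, add_comm (∑ n ∈ range k, _),
    ← sum_range_add u N k, add_comm N k, sum_range_add, add_comm]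
  simp only [add_comm k]

variable {C : ℝ}

theorem meanZero_shift_sub (hu : ∀ n, ‖u n‖ ≤ C) (k : ℕ) :
    MeanZero fun n ↦ u (n + k) - u n := by
  have sum_le (m : ℕ) : ‖∑ n ∈ range k, u (m + n)‖ ≤ k * C := by
    simpa using norm_sum_le_of_le (range k) fun n _ ↦ hu (m + n)
  refine meanZero_of_norm_sum_le (C := k * C + k * C) fun N ↦ ?_
  rw [sum_range_shift_sub]
  exact (norm_sub_le _ _).trans (add_le_add (sum_le N) (by simpa using sum_le 0))

theorem MeanZero.shift (h : MeanZero u) (hu : ∀ n, ‖u n‖ ≤ C) (k : ℕ) :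
    MeanZero fun n ↦ u (n + k) := by
  simpa using (meanZero_shift_sub hu k).add h

theorem MeanZero.tendsto_inv_mul_sum_Icc {𝕜 : Type*} [RCLike 𝕜] {u : ℕ → 𝕜} (h : MeanZero u)
    (hu : ∀ n, ‖u n‖ ≤ C) :
    Tendsto (fun N : ℕ ↦ (N : 𝕜)⁻¹ * ∑ n ∈ Finset.Icc 1 N, u n) atTop (𝓝 0) := by
  have sum_Icc (N : ℕ) : ∑ n ∈ Finset.Icc 1 N, u n = ∑ n ∈ range N, u (n + 1) := by
    rw [range_eq_Ico, sum_Ico_add' u 0 N 1, zero_add, ← Finset.Ico_succ_right_eq_Icc]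
    rfl
  simpa only [sum_Icc, RCLike.real_smul_eq_coe_mul, RCLike.ofReal_inv, RCLike.ofReal_natCast]
    using IsLittleO.tendsto_inv_smul_nhds_zero (h.shift hu 1)

end MeanZero

section VanDerCorput

variable {𝕜 E ι : Type*} [RCLike 𝕜] [NormedAddCommGroup E] [InnerProductSpace 𝕜 E]

theorem norm_sum_sq_eq (s : Finset ι) (v : ι → E) :
    ‖∑ i ∈ s, v i‖ ^ 2 =
      ∑ i ∈ s, ‖v i‖ ^ 2 + RCLike.re (∑ q ∈ s.offDiag, inner 𝕜 (v q.1) (v q.2)) := by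
  classical
  simp_rw [@norm_sq_eq_re_inner 𝕜, sum_inner, inner_sum, ← sum_product',
    ← diag_union_offDiag, sum_union (disjoint_diag_offDiag _), sum_diag, map_add, map_sum]

variable {u : ℕ → E} {C : ℝ}

theorem eventually_sum_norm_window_sq_le {s : Finset ι} {d : ι → ℕ} (hu : ∀ n, ‖u n‖ ≤ C)
    (hd : (s : Set ι).Pairwise fun i j ↦
      MeanZero fun n ↦ inner 𝕜 (u (n + d i)) (u (n + d j))) :
    ∀ᶠ N : ℕ in atTop, ∑ n ∈ range N, ‖∑ i ∈ s, u (n + d i)‖ ^ 2 ≤ (#s * C ^ 2 + 1) * N := by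
  classical
  have off_diagonal : MeanZero fun n ↦
      ∑ q ∈ s.offDiag, inner 𝕜 (u (n + d q.1)) (u (n + d q.2)) :=
    MeanZero.sum fun q hq ↦ by
      obtain ⟨h₁, h₂, hne⟩ := mem_offDiag.1 hq
      exact hd h₁ h₂ hne
  filter_upwards [meanZero_iff.1 off_diagonal 1 one_pos] with N hN
  simp only [norm_sum_sq_eq (𝕜 := 𝕜) s, sum_add_distrib, ← map_sum RCLike.re]
  have diagonal : ∑ n ∈ range N, ∑ i ∈ s, ‖u (n + d i)‖ ^ 2 ≤ N * (#s * C ^ 2) := by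
    calc _ ≤ ∑ _n ∈ range N, ∑ _i ∈ s, C ^ 2 := by gcongr; exact hu _
      _ = N * (#s * C ^ 2) := by simp
  linarith [(RCLike.re_le_norm _).trans hN]

/-- Replacing `u n` by the mean of `u (n + d i)` over `i < H` changes the partial sums by `O(1)`,
and orthogonality on average makes that mean `O(1 / √H)` in quadratic mean. -/
theorem meanZero_of_pairwise_correlations (hu : ∀ n, ‖u n‖ ≤ C) (d : ℕ → ℕ)
    (hd : Pairwise fun i j ↦ MeanZero fun n ↦ inner 𝕜 (u (n + d i)) (u (n + d j))) :
    MeanZero u := by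
  refine meanZero_iff.2 fun ε hε ↦ ?_
  obtain ⟨H, hH⟩ := exists_nat_gt ((C ^ 2 + 1) / (ε / 2) ^ 2)
  have hH0 : (0 : ℝ) < H := lt_of_le_of_lt (by positivity) hH
  have hH1 : (1 : ℝ) ≤ H := by exact_mod_cast hH0
  rw [div_lt_iff₀ (by positivity)] at hH
  have drift : MeanZero fun n ↦ ∑ i ∈ range H, (u (n + d i) - u n) :=
    MeanZero.sum fun i _ ↦ meanZero_shift_sub hu _
  filter_upwards [eventually_sum_norm_window_sq_le hu (hd.set_pairwise (Finset.range H : Set ℕ)),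
    meanZero_iff.1 drift (ε / 2 * H) (by positivity)] with N window_sq_le drift_le
  have window_le : ‖∑ n ∈ range N, ∑ i ∈ range H, u (n + d i)‖ ≤ ε / 2 * H * N := by
    refine le_of_sq_le_sq ?_ (by positivity)
    calc ‖∑ n ∈ range N, ∑ i ∈ range H, u (n + d i)‖ ^ 2
        ≤ (∑ n ∈ range N, ‖∑ i ∈ range H, u (n + d i)‖) ^ 2 := by gcongr; exact norm_sum_le _ _
      _ ≤ N * ∑ n ∈ range N, ‖∑ i ∈ range H, u (n + d i)‖ ^ 2 := by
        simpa only [card_range] using sq_sum_le_card_mul_sum_sq (s := range N)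
      _ ≤ N * ((H * C ^ 2 + 1) * N) := by gcongr; simpa only [card_range] using window_sq_le
      _ ≤ N * ((H * (H * (ε / 2) ^ 2)) * N) := by gcongr; nlinarith
      _ = (ε / 2 * H * N) ^ 2 := by ring
  have window_sub_drift : H • ∑ n ∈ range N, u n =
      ∑ n ∈ range N, ∑ i ∈ range H, u (n + d i) -
        ∑ n ∈ range N, ∑ i ∈ range H, (u (n + d i) - u n) := by
    simp [sum_sub_distrib, ← smul_sum]
  have : (H : ℝ) * ‖∑ n ∈ range N, u n‖ ≤ H * (ε * N) := by
    calc (H : ℝ) * ‖∑ n ∈ range N, u n‖ = ‖H • ∑ n ∈ range N, u n‖ := by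
          simp [RCLike.norm_nsmul 𝕜]
      _ ≤ ε / 2 * H * N + ε / 2 * H * N := by
          rw [window_sub_drift]
          exact (norm_sub_le _ _).trans (add_le_add window_le drift_le)
      _ = H * (ε * N) := by ring
  exact le_of_mul_le_mul_left this hH0

/-- Van der Corput's lemma. The shifts are the multiples of a large `M`, so that their differences
are all large. -/
theorem meanZero_of_eventually_correlations (hu : ∀ n, ‖u n‖ ≤ C)
    (hcorr : ∀ᶠ h in atTop, MeanZero fun n ↦ inner 𝕜 (u n) (u (n + h))) : MeanZero u := by
  obtain ⟨M, hM⟩ := eventually_atTop.1 hcorr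
  have correlation_of_lt {i j : ℕ} (hij : i < j) :
      MeanZero fun n ↦ inner 𝕜 (u (n + i * M)) (u (n + j * M)) := by
    obtain ⟨k, rfl⟩ := Nat.exists_eq_add_of_lt hij
    have hbound (n : ℕ) : ‖inner 𝕜 (u n) (u (n + (k + 1) * M))‖ ≤ C * C :=
      (norm_inner_le_norm _ _).trans
        (mul_le_mul (hu _) (hu _) (norm_nonneg _) ((norm_nonneg _).trans (hu n)))
    have := (hM ((k + 1) * M) (Nat.le_mul_of_pos_left M k.succ_pos)).shift hbound (i * M)
    convert this using 4
    ring
  refine meanZero_of_pairwise_correlations (𝕜 := 𝕜) hu (· * M) fun i j hij ↦ ?_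
  rcases hij.lt_or_gt with hlt | hgt
  · exact correlation_of_lt hlt
  · simpa only [inner_conj_symm] using (correlation_of_lt hgt).conj

end VanDerCorput

section Separation

theorem card_le_div_add_one {s : Finset ℕ} {K N : ℕ} (hK : 0 < K) (hsN : s ⊆ range N)
    (hs : ∀ a ∈ s, ∀ b ∈ s, a < b → a + K ≤ b) : #s ≤ N / K + 1 := by
  have div_ne {a b : ℕ} (ha : a ∈ s) (hb : b ∈ s) (hab : a < b) : a / K ≠ b / K := by
    have : (a + K) / K ≤ b / K := Nat.div_le_div_right (hs a ha b hb hab)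
    rw [Nat.add_div_right a hK] at this
    lia
  rw [← card_range (N / K + 1)]
  refine card_le_card_of_injOn (· / K) (fun n hn ↦ ?_) fun a ha b hb hab ↦ ?_
  · simpa using Nat.lt_succ_of_le (Nat.div_le_div_right (mem_range.1 (hsN hn)).le)
  · by_contra hne
    rcases lt_or_gt_of_ne hne with hlt | hgt
    · exact div_ne ha hb hlt hab
    · exact div_ne hb ha hgt hab.symm

variable {G : Type*} [NormedAddCommGroup G] {g : G}

theorem exists_pos_le_norm_nsmul (hg : ¬IsOfFinAddOrder g) (K : ℕ) :
    ∃ δ : ℝ, 0 < δ ∧ ∀ m ∈ Finset.Ioo 0 K, δ ≤ ‖m • g‖ := by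
  have : ∀ᶠ δ : ℝ in 𝓝[>] 0, ∀ m ∈ Finset.Ioo 0 K, δ ≤ ‖m • g‖ :=
    (eventually_all_finset _).2 fun m hm ↦ by
      have hm0 : m • g ≠ 0 := fun h ↦
        hg (isOfFinAddOrder_iff_nsmul_eq_zero.2 ⟨m, (Finset.mem_Ioo.1 hm).1, h⟩)
      exact eventually_nhdsWithin_of_eventually_nhds (eventually_le_nhds (norm_pos_iff.2 hm0))
  exact (eventually_mem_nhdsWithin.and this).exists

theorem exists_card_nsmul_dist_lt_le (hg : ¬IsOfFinAddOrder g) {K : ℕ} (hK : 0 < K) :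
    ∃ δ : ℝ, 0 < δ ∧ ∀ (y : G) (N : ℕ), #{n ∈ range N | dist (n • g) y < δ} ≤ N / K + 1 := by
  obtain ⟨δ, hδ, le_norm⟩ := exists_pos_le_norm_nsmul hg K
  refine ⟨δ / 2, half_pos hδ, fun y N ↦
    card_le_div_add_one hK (filter_subset _ _) fun a ha b hb hab ↦ ?_⟩
  have dist_lt : ‖(b - a) • g‖ < δ := by
    rw [sub_nsmul g hab.le, ← sub_eq_add_neg, ← dist_eq_norm]
    linarith [dist_triangle_right (b • g) (a • g) y, (mem_filter.1 ha).2, (mem_filter.1 hb).2]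
  by_contra! hlt
  exact (le_norm (b - a) (Finset.mem_Ioo.2 (by lia))).not_gt dist_lt

open Classical in
theorem exists_eventually_card_nsmul_mem_thickening_le (hg : ¬IsOfFinAddOrder g) {D : Set G}
    (hD : D.Finite) {η : ℝ} (hη : 0 < η) :
    ∃ δ : ℝ, 0 < δ ∧ ∀ᶠ N : ℕ in atTop,
      #{n ∈ range N | n • g ∈ Metric.thickening δ D} ≤ η * N := by
  lift D to Finset G using hD
  obtain ⟨K, hK⟩ := exists_nat_gt (2 * #D / η)
  have hK0 : (0 : ℝ) < K := lt_of_le_of_lt (by positivity) hK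
  obtain ⟨δ, hδ, card_le⟩ := exists_card_nsmul_dist_lt_le hg (K := K) (by exact_mod_cast hK0)
  refine ⟨δ, hδ, ?_⟩
  filter_upwards [eventually_ge_atTop K] with N hN
  have one_le : 1 ≤ (N : ℝ) / K := by rw [one_le_div hK0]; exact_mod_cast hN
  have cover : {n ∈ range N | n • g ∈ Metric.thickening δ (D : Set G)} ⊆
      D.biUnion fun y ↦ {n ∈ range N | dist (n • g) y < δ} := by
    intro n
    simp only [mem_filter, Metric.mem_thickening_iff, mem_biUnion, SetLike.mem_coe]
    grind
  calc (#{n ∈ range N | n • g ∈ Metric.thickening δ (D : Set G)} : ℝ)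
      ≤ (#D * (N / K + 1) : ℕ) := by
        exact_mod_cast (card_le_card cover).trans
          (card_biUnion_le_card_mul _ _ _ fun y _ ↦ card_le y N)
    _ ≤ #D * (N / K + N / K) := by
        push_cast
        gcongr
        exact Nat.cast_div_le
    _ = 2 * #D / K * N := by ring
    _ ≤ η * N := by
        gcongr
        rw [div_lt_iff₀ hη] at hK
        rw [div_le_iff₀ hK0]
        linarith

end Separation

section Discontinuities

variable {X : Type*} [PseudoMetricSpace X] {D : Set X} {C : ℝ}

theorem exists_continuousMap_eqOn_compl_thickening {E : Type*} [NormedAddCommGroup E]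
    [NormedSpace ℝ E] {F : X → E} (hF : ∀ y, ‖F y‖ ≤ C) (hFD : ∀ y ∉ D, ContinuousAt F y)
    {δ : ℝ} (hδ : 0 < δ) :
    ∃ G : C(X, E), Set.EqOn G F (Metric.thickening δ D)ᶜ ∧ ∀ y, ‖F y - G y‖ ≤ C := by
  let τ (y : X) : ℝ := thickenedIndicator hδ D y
  have hτ : Continuous τ := NNReal.continuous_coe.comp (thickenedIndicator hδ D).continuous
  have hτ0 (y : X) : 0 ≤ τ y := NNReal.coe_nonneg _
  have hτ1 (y : X) : τ y ≤ 1 := by exact_mod_cast thickenedIndicator_le_one hδ D y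
  have continuous_cutoff : Continuous fun y ↦ (1 - τ y) • F y := by
    refine continuous_iff_continuousAt.2 fun y ↦ ?_
    by_cases hy : y ∈ D
    · have hτy : 1 - τ y = 0 := by
        simp only [τ, thickenedIndicator_one hδ D hy, NNReal.coe_one, sub_self]
      have tendsto_zero : Tendsto (fun z ↦ 1 - τ z) (𝓝 y) (𝓝 0) :=
        hτy ▸ (continuous_const.sub hτ).tendsto y
      rw [ContinuousAt, hτy, zero_smul]
      exact tendsto_zero.zero_smul_isBoundedUnder_le (isBoundedUnder_of ⟨C, hF⟩)
    · exact (continuous_const.sub hτ).continuousAt.smul (hFD y hy)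
  refine ⟨⟨_, continuous_cutoff⟩, fun y hy ↦ ?_, fun y ↦ ?_⟩
  · have hτy : τ y = 0 := by simp only [τ, thickenedIndicator_zero hδ D hy, NNReal.coe_zero]
    simp [hτy]
  · calc ‖F y - (1 - τ y) • F y‖ = τ y * ‖F y‖ := by
          rw [sub_smul, one_smul, sub_sub_cancel, norm_smul, Real.norm_of_nonneg (hτ0 y)]
      _ ≤ C := (mul_le_of_le_one_left (norm_nonneg _) (hτ1 y)).trans (hF y)

open Classical in
theorem meanZero_mul_of_continuousAt_compl {R : Type*} [NormedRing R] [NormedSpace ℝ R]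
    {F : X → R} {x : ℕ → X} {c : ℕ → R} (hc : ∀ n, ‖c n‖ ≤ 1)
    (hcx : ∀ G : C(X, R), MeanZero fun n ↦ c n * G (x n))
    (hD : ∀ η : ℝ, 0 < η → ∃ δ : ℝ, 0 < δ ∧ ∀ᶠ N : ℕ in atTop,
      #{n ∈ range N | x n ∈ Metric.thickening δ D} ≤ η * N)
    (hF : ∀ y, ‖F y‖ ≤ C) (hFD : ∀ y ∉ D, ContinuousAt F y) :
    MeanZero fun n ↦ c n * F (x n) := by
  have hC : 0 ≤ C := (norm_nonneg _).trans (hF (x 0))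
  refine meanZero_of_approx fun ε hε ↦ ?_
  obtain ⟨δ, hδ, hcard⟩ := hD (ε / (C + 1)) (by positivity)
  obtain ⟨G, hGF, hFG⟩ := exists_continuousMap_eqOn_compl_thickening hF hFD hδ
  refine ⟨_, hcx G, ?_⟩
  have norm_sub_le (n : ℕ) :
      ‖c n * F (x n) - c n * G (x n)‖ ≤ if x n ∈ Metric.thickening δ D then C else 0 := by
    rw [← mul_sub]
    refine ((norm_mul_le _ _).trans (mul_le_of_le_one_left (norm_nonneg _) (hc n))).trans ?_
    split_ifs with hn
    · exact hFG _
    · simp [hGF hn]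
  filter_upwards [hcard] with N hN
  calc ∑ n ∈ range N, ‖c n * F (x n) - c n * G (x n)‖
      ≤ ∑ n ∈ range N, if x n ∈ Metric.thickening δ D then C else 0 :=
        sum_le_sum fun n _ ↦ norm_sub_le n
    _ = #{n ∈ range N | x n ∈ Metric.thickening δ D} * C := by
        rw [← sum_filter, sum_const, nsmul_eq_mul]
    _ ≤ ε / (C + 1) * N * (C + 1) := by gcongr; linarith
    _ = ε * N := by field_simp

end Discontinuities

section Exponential

theorem eFun_eq_fourierChar (x : ℝ) : eFun x = 𝐞 x := by
  rw [eFun, Real.fourierChar_apply]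
  congr 1
  push_cast
  ring

theorem eFun_add (x y : ℝ) : eFun (x + y) = eFun x * eFun y := by
  simp only [eFun_eq_fourierChar, AddChar.map_add_eq_mul, Circle.coe_mul]

theorem eFun_natCast_mul (n : ℕ) (x : ℝ) : eFun (n * x) = eFun x ^ n := by
  rw [eFun_eq_fourierChar, eFun_eq_fourierChar, ← nsmul_eq_mul, AddChar.map_nsmul_eq_pow,
    Circle.coe_pow]

theorem norm_eFun (x : ℝ) : ‖eFun x‖ = 1 := by
  rw [eFun_eq_fourierChar, Circle.norm_coe]

theorem continuous_eFun : Continuous eFun := by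
  unfold eFun
  fun_prop

theorem eFun_eq_one_iff {x : ℝ} : eFun x = 1 ↔ ∃ k : ℤ, x = k := by
  rw [eFun, Complex.exp_eq_one_iff]
  refine exists_congr fun k ↦ ?_
  rw [mul_comm (k : ℂ), mul_right_inj' Complex.two_pi_I_ne_zero]
  norm_cast

theorem inner_eFun (x y : ℝ) : inner ℂ (eFun x) (eFun y) = eFun (y - x) := by
  simp only [RCLike.inner_apply, eFun_eq_fourierChar, sub_eq_add_neg, AddChar.map_add_eq_mul,
    AddChar.map_neg_eq_inv, Circle.coe_mul, Circle.coe_inv_eq_conj]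

theorem fourier_coe_eq_eFun (k : ℤ) (x : ℝ) : fourier k (x : UnitAddCircle) = eFun (k * x) := by
  rw [fourier_coe_apply, eFun]
  congr 1
  push_cast
  ring

end Exponential

section Weyl

theorem meanZero_pow {K : Type*} [NormedDivisionRing K] {z : K} (hz : ‖z‖ ≤ 1) (hz1 : z ≠ 1) :
    MeanZero fun n ↦ z ^ n := by
  refine meanZero_of_norm_sum_le (C := 2 / ‖z - 1‖) fun N ↦ ?_
  rw [geom_sum_eq hz1, norm_div]
  gcongr
  calc ‖z ^ N - 1‖ ≤ ‖z‖ ^ N + 1 := by simpa using norm_sub_le (z ^ N) 1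
    _ ≤ 2 := by linarith [pow_le_one₀ (n := N) (norm_nonneg z) hz]

variable {α θ : ℝ}

theorem meanZero_eFun_natCast_mul (hθ : ∀ l : ℤ, θ ≠ l) : MeanZero fun n ↦ eFun (n * θ) := by
  have hz1 : eFun θ ≠ 1 := by simpa only [Ne, eFun_eq_one_iff, not_exists] using hθ
  simpa only [eFun_natCast_mul] using meanZero_pow (norm_eFun θ).le hz1

theorem meanZero_eFun_mul_fourier (hθ : ∀ k l : ℤ, θ + k * α ≠ l) (k : ℤ) :
    MeanZero fun n ↦ eFun (n * θ) * fourier k (n • (α : UnitAddCircle)) := by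
  convert meanZero_eFun_natCast_mul (hθ k) using 2 with n
  rw [← AddCircle.coe_nsmul, fourier_coe_eq_eFun, ← eFun_add, nsmul_eq_mul]
  ring_nf

theorem meanZero_eFun_mul_continuousMap (hθ : ∀ k l : ℤ, θ + k * α ≠ l)
    (F : C(UnitAddCircle, ℂ)) :
    MeanZero fun n ↦ eFun (n * θ) * F (n • (α : UnitAddCircle)) := by
  have of_mem_span (G) (hG : G ∈ Submodule.span ℂ (Set.range (@fourier 1))) :
      MeanZero fun n ↦ eFun (n * θ) * G (n • (α : UnitAddCircle)) := by
    induction hG using Submodule.span_induction with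
    | mem G hG =>
      obtain ⟨k, rfl⟩ := hG
      exact meanZero_eFun_mul_fourier hθ k
    | zero => simp [MeanZero]
    | add G G' _ _ h h' => simpa only [ContinuousMap.add_apply, mul_add] using h.add h'
    | smul c G _ h => simpa [mul_left_comm] using h.const_mul c
  refine meanZero_of_approx fun ε hε ↦ ?_
  have mem_closure :
      F ∈ closure (Submodule.span ℂ (Set.range (@fourier 1)) : Set C(UnitAddCircle, ℂ)) := by
    rw [← Submodule.topologicalClosure_coe, span_fourier_closure_eq_top]
    trivial
  obtain ⟨G, hG, hFG⟩ := Metric.mem_closure_iff.1 mem_closure ε hε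
  refine ⟨_, of_mem_span G hG, .of_forall fun N ↦ ?_⟩
  calc _ ≤ ∑ _n ∈ range N, ε := sum_le_sum fun n _ ↦ by
        rw [← mul_sub, norm_mul, norm_eFun, one_mul, ← dist_eq_norm]
        exact (ContinuousMap.dist_apply_le_dist _).trans hFG.le
    _ = ε * N := by simp [mul_comm]

theorem continuousAt_liftIco {𝕜 X : Type*} [AddCommGroup 𝕜] [LinearOrder 𝕜]
    [IsOrderedAddMonoid 𝕜] [Archimedean 𝕜] [TopologicalSpace 𝕜] [OrderTopology 𝕜]
    [TopologicalSpace X] {p a : 𝕜} [Fact (0 < p)] {f : 𝕜 → X} {D : Set 𝕜}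
    (hf : ∀ t ∈ Set.Ioo a (a + p), t ∉ D → ContinuousAt f t) {y : AddCircle p}
    (hy : y ∉ ((↑) : 𝕜 → AddCircle p) '' insert a D) :
    ContinuousAt (AddCircle.liftIco p a f) y := by
  set t := AddCircle.equivIco p a y
  have coe_t : ((t : 𝕜) : AddCircle p) = y := AddCircle.coe_equivIco
  have not_mem : (t : 𝕜) ∉ insert a D := fun h ↦ hy ⟨t, h, coe_t⟩
  rw [Set.mem_insert_iff, not_or] at not_mem
  have mem_Ioo : (t : 𝕜) ∈ Set.Ioo a (a + p) := ⟨t.2.1.lt_of_ne' not_mem.1, t.2.2⟩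
  have hya : y ≠ (a : AddCircle p) := fun h ↦ hy ⟨a, Set.mem_insert _ _, h.symm⟩
  exact ContinuousAt.comp (x := y) (f := fun y ↦ (AddCircle.equivIco p a y : 𝕜))
    (hf t mem_Ioo not_mem.2)
    (continuous_subtype_val.continuousAt.comp (AddCircle.continuousAt_equivIco p a hya))

theorem liftIco_coe_eq_fract {X : Type*} (f : ℝ → X) (x : ℝ) :
    AddCircle.liftIco 1 0 f (x : UnitAddCircle) = f (Int.fract x) := by
  have mem_Ico : Int.fract x ∈ Set.Ico (0 : ℝ) (0 + 1) := by
    rw [zero_add]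
    exact ⟨Int.fract_nonneg x, Int.fract_lt_one x⟩
  rw [← AddCircle.coe_fract, AddCircle.liftIco_coe_apply mem_Ico]

theorem meanZero_eFun_mul_fract (hα : Irrational α) (hθ : ∀ k l : ℤ, θ + k * α ≠ l) {f : ℝ → ℂ}
    {C : ℝ} (hf : ∀ t ∈ Set.Ico (0 : ℝ) 1, ‖f t‖ ≤ C) {D : Set ℝ} (hD : D.Finite)
    (hfD : ∀ t ∈ Set.Ioo (0 : ℝ) 1, t ∉ D → ContinuousAt f t) :
    MeanZero fun n ↦ eFun (n * θ) * f (Int.fract (n * α)) := by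
  have not_isOfFinAddOrder : ¬IsOfFinAddOrder (α : UnitAddCircle) :=
    AddCircle.not_isOfFinAddOrder_iff_forall_rat_ne_div.2 fun q ↦ by
      simpa using (hα.ne_rat q).symm
  have norm_le (y : UnitAddCircle) : ‖AddCircle.liftIco 1 0 f y‖ ≤ C := by
    induction y using QuotientAddGroup.induction_on with | _ x
    rw [liftIco_coe_eq_fract]
    exact hf _ ⟨Int.fract_nonneg x, Int.fract_lt_one x⟩
  have fract_eq (n : ℕ) :
      f (Int.fract (n * α)) = AddCircle.liftIco 1 0 f (n • (α : UnitAddCircle)) := by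
    rw [← AddCircle.coe_nsmul, liftIco_coe_eq_fract, nsmul_eq_mul]
  simp only [fract_eq]
  exact meanZero_mul_of_continuousAt_compl (fun n ↦ (norm_eFun _).le)
    (meanZero_eFun_mul_continuousMap hθ)
    (fun η hη ↦ exists_eventually_card_nsmul_mem_thickening_le not_isOfFinAddOrder
      ((hD.insert 0).image _) hη)
    norm_le fun y hy ↦ continuousAt_liftIco (by simpa only [zero_add] using hfD) hy

theorem meanZero_eFun_mul_indicator_fract (hα : Irrational α) (hθ : ∀ k l : ℤ, θ + k * α ≠ l)
    {S : Set ℝ} (hS : (frontier S).Finite) {g : ℝ → ℂ} (hg : Continuous g) :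
    MeanZero fun n ↦ eFun (n * θ) * S.indicator g (Int.fract (n * α)) := by
  obtain ⟨C, hC⟩ := (isCompact_Icc (a := (0 : ℝ)) (b := 1)).exists_bound_of_continuousOn
    hg.continuousOn
  exact meanZero_eFun_mul_fract hα hθ
    (fun t ht ↦ (norm_indicator_le_norm_self _ _).trans (hC t (Set.Ico_subset_Icc_self ht))) hS
    fun t _ ht ↦ hg.continuousOn.continuousAt_indicator ht

end Weyl

section Frequencies

variable {α β γ : ℝ}
  (hind : ∀ a b c : ℚ, (a : ℝ) + (b : ℝ) * α + (c : ℝ) * β = 0 → a = 0 ∧ b = 0 ∧ c = 0)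

include hind

theorem irrational_of_rationally_independent : Irrational α := by
  rintro ⟨q, hq⟩
  exact one_ne_zero (hind (-q) 1 0 (by push_cast; linarith)).2.1

theorem mul_eq_mul_of_resonances {h h' m m' k k' l l' : ℤ} (hres : m * β + h * γ + k * α = l)
    (hres' : m' * β + h' * γ + k' * α = l') : h' * m = h * m' := by
  have := (hind (h * l' - h' * l) (h' * k - h * k') (h' * m - h * m') (by
    push_cast
    linear_combination (h' : ℝ) * hres - h * hres')).2.2
  exact_mod_cast sub_eq_zero.1 this

theorem eventually_not_resonance (γ : ℝ) :
    ∀ᶠ h : ℕ in atTop, ∀ m : ℤ, |h * α - m| ≤ 1 → ∀ k l : ℤ, m * β + h * γ + k * α ≠ l := by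
  by_cases hrel : ∃ (h : ℕ) (m k l : ℤ), 0 < h ∧ m * β + h * γ + k * α = l
  · obtain ⟨h', m', k', l', hpos, hres'⟩ := hrel
    have abs_pos : 0 < |h' * α - m'| :=
      abs_sub_pos.2 (((irrational_of_rationally_independent hind).natCast_mul hpos.ne').ne_int m')
    filter_upwards [(tendsto_natCast_atTop_atTop.atTop_mul_const abs_pos).eventually_gt_atTop
      (h' : ℝ)] with h hlt m hm k l hres
    have proportional : (h' * m : ℝ) = h * m' := by
      exact_mod_cast mul_eq_mul_of_resonances (h := h) (h' := h') hind hres hres'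
    refine hlt.not_ge ?_
    calc (h : ℝ) * |h' * α - m'| = |h * (h' * α - m')| := by rw [abs_mul, Nat.abs_cast]
      _ = |h' * (h * α - m)| := by congr 1; linear_combination proportional
      _ = h' * |h * α - m| := by rw [abs_mul, Nat.abs_cast]
      _ ≤ h' := mul_le_of_le_one_right h'.cast_nonneg hm
  · filter_upwards [eventually_gt_atTop 0] with h hpos m _ k l hres
    exact hrel ⟨h, m, k, l, hpos, hres⟩

end Frequencies

section Floor

variable {K : Type*} [Ring K] [LinearOrder K] [IsStrictOrderedRing K] [FloorRing K]

theorem floor_fract_add_mem_Icc (x y : K) :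
    ⌊Int.fract x + y⌋ ∈ Finset.Icc ⌊y⌋ (⌊y⌋ + 1) := by
  rw [Finset.mem_Icc, ← Int.floor_add_one]
  refine ⟨Int.floor_mono (le_add_of_nonneg_left (Int.fract_nonneg x)), Int.floor_mono ?_⟩
  rw [add_comm]
  gcongr
  exact (Int.fract_lt_one x).le

theorem abs_sub_le_one_of_mem_Icc_floor {y : K} {m : ℤ} (hm : m ∈ Finset.Icc ⌊y⌋ (⌊y⌋ + 1)) :
    |y - m| ≤ 1 := by
  obtain ⟨floor_le, le_floor⟩ := Finset.mem_Icc.1 hm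
  rw [abs_sub_le_iff, sub_le_iff_le_add', sub_le_iff_le_add']
  constructor
  · calc y ≤ ⌊y⌋ + 1 := (Int.lt_floor_add_one y).le
      _ ≤ m + 1 := by gcongr
  · calc (m : K) ≤ ⌊y⌋ + 1 := by exact_mod_cast le_floor
      _ ≤ y + 1 := by gcongr; exact Int.floor_le y

theorem preimage_floor_add_singleton (y : K) (m : ℤ) :
    (fun t ↦ ⌊t + y⌋) ⁻¹' {m} = Set.Ico (m - y) (m + 1 - y) := by
  rw [← Set.preimage_add_const_Ico, ← Int.preimage_floor_singleton]
  rfl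

end Floor

section Bracket

theorem eval_eq_of_natDegree_le_two {R : Type*} [CommSemiring R] {p : R[X]}
    (hp : p.natDegree ≤ 2) (x : R) :
    p.eval x = p.coeff 2 * x ^ 2 + p.coeff 1 * x + p.coeff 0 := by
  rw [Polynomial.eval_eq_sum_range' (Nat.lt_succ_of_le hp)]
  simp only [sum_range_succ, sum_range_zero]
  ring

theorem finite_frontier_preimage_floor_add_singleton (y : ℝ) (m : ℤ) :
    (frontier ((fun t ↦ ⌊t + y⌋) ⁻¹' {m})).Finite := by
  rw [preimage_floor_add_singleton, frontier_Ico (by linarith)]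
  exact Set.toFinite _

/-- The bracket quadratic phase `⌊nα⌋nβ + p(n)`. -/
noncomputable def bracketPhase (α β : ℝ) (p : ℝ[X]) (n : ℕ) : ℝ :=
  ⌊n * α⌋ * n * β + p.eval (n : ℝ)

variable {α β : ℝ} {p : ℝ[X]}

theorem bracketPhase_add_sub (hp : p.natDegree ≤ 2) (n h : ℕ) {m : ℤ}
    (hm : ⌊Int.fract (n * α) + h * α⌋ = m) :
    bracketPhase α β p (n + h) - bracketPhase α β p n =
      (m * h * β + p.coeff 2 * h ^ 2 + p.coeff 1 * h) +
        (n * (m * β + h * (α * β + 2 * p.coeff 2)) + -(h * β * Int.fract (n * α))) := by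
  have floor_add : ⌊((n + h : ℕ) : ℝ) * α⌋ = ⌊n * α⌋ + m := by
    rw [← hm, ← Int.floor_intCast_add, ← add_assoc, Int.floor_add_fract, Nat.cast_add, add_mul]
  simp only [bracketPhase, floor_add, eval_eq_of_natDegree_le_two hp, Int.fract]
  push_cast
  ring

theorem eFun_bracketPhase_add_sub (hp : p.natDegree ≤ 2) (n h : ℕ) :
    eFun (bracketPhase α β p (n + h) - bracketPhase α β p n) =
      ∑ m ∈ Finset.Icc ⌊h * α⌋ (⌊h * α⌋ + 1),
        eFun (m * h * β + p.coeff 2 * h ^ 2 + p.coeff 1 * h) *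
          (eFun (n * (m * β + h * (α * β + 2 * p.coeff 2))) *
            ((fun t ↦ ⌊t + h * α⌋) ⁻¹' {m}).indicator (fun t ↦ eFun (-(h * β * t)))
              (Int.fract (n * α))) := by
  rw [sum_eq_single_of_mem _ (floor_fract_add_mem_Icc (n * α) (h * α)) fun m _ hm ↦ ?_]
  · rw [Set.indicator_of_mem (Set.mem_preimage.2 (Set.mem_singleton _)), ← eFun_add, ← eFun_add,
      ← bracketPhase_add_sub hp n h rfl]
  · rw [Set.indicator_of_notMem (mt Set.mem_preimage.1 hm.symm), mul_zero, mul_zero]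

theorem eventually_meanZero_inner_bracketPhase
    (hind : ∀ a b c : ℚ, (a : ℝ) + (b : ℝ) * α + (c : ℝ) * β = 0 → a = 0 ∧ b = 0 ∧ c = 0)
    (hp : p.natDegree ≤ 2) :
    ∀ᶠ h in atTop, MeanZero fun n ↦
      inner ℂ (eFun (bracketPhase α β p n)) (eFun (bracketPhase α β p (n + h))) := by
  filter_upwards [eventually_not_resonance hind (α * β + 2 * p.coeff 2)] with h hfreq
  simp only [inner_eFun, eFun_bracketPhase_add_sub hp]
  refine MeanZero.sum fun m hm ↦ MeanZero.const_mul ?_ _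
  exact meanZero_eFun_mul_indicator_fract (irrational_of_rationally_independent hind)
    (hfreq m (abs_sub_le_one_of_mem_Icc_floor hm))
    (finite_frontier_preimage_floor_add_singleton _ m) (continuous_eFun.comp (by fun_prop))

end Bracket

theorem statement18 (α β : ℝ)
    (hind : ∀ a b c : ℚ, (a : ℝ) + (b : ℝ) * α + (c : ℝ) * β = 0 →
      a = 0 ∧ b = 0 ∧ c = 0)
    (p : Polynomial ℝ) (hp : p.natDegree ≤ 2) :
    Tendsto (fun N : ℕ => (N : ℂ)⁻¹ * ∑ n ∈ Finset.Icc 1 N,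
        eFun ((⌊(n : ℝ) * α⌋ : ℝ) * (n : ℝ) * β + p.eval (n : ℝ)))
      atTop (nhds 0) := by
  have norm_le (n : ℕ) : ‖eFun (bracketPhase α β p n)‖ ≤ 1 := (norm_eFun _).le
  have meanZero : MeanZero fun n ↦ eFun (bracketPhase α β p n) :=
    meanZero_of_eventually_correlations norm_le (eventually_meanZero_inner_bracketPhase hind hp)
  exact meanZero.tendsto_inv_mul_sum_Icc norm_le
end

section
/- Let Λ be a set of integers. Then there exist a system (X,ℬ,μ,T) and a set A ∈ ℬ with μ(A) = d̄(Λ) such that for every ℓ ∈ ℕ and all integers n₁,…,n_ℓ, one has d̄(Λ ∩ (Λ−n₁) ∩ … ∩ (Λ−n_ℓ)) ≥ μ(A ∩ T^{-n₁}A ∩ … ∩ T^{-n_ℓ}A). -/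
open Filter MeasureTheory

/-- The upper (Banach) density of a set of integers:
`limsup_{N→∞} |Λ ∩ {-N,…,N}| / (2N+1)`. -/
noncomputable def upperDensity (Λ : Set ℤ) : ℝ :=
  letI := Classical.decPred fun x : ℤ => x ∈ Λ
  limsup (fun N : ℕ =>
    (((Finset.Icc (-(N : ℤ)) (N : ℤ)).filter fun x => x ∈ Λ).card : ℝ) / (2 * N + 1))
    atTop

/-!
Regard `Λ` as a point of the shift space `ℤ → Bool`. Averaging Dirac masses along its orbit over
`{-N, …, N}` gives measures whose value at a set is the proportion of times in `{-N, …, N}` at which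
the orbit visits that set. Let `μ` be a weak limit of these along an ultrafilter realizing the
limsup in the density of `Λ`. It is shift invariant, because an interval and its translate by one
differ in only two points. Along the ultrafilter the visiting frequencies of a clopen set converge
to its `μ`-measure: for `{ω | ω 0 = true}`, which is visited at the times in `Λ`, this limit is the
upper density by choice of the ultrafilter, and for any other clopen set it is at most the upper
density of the set of visiting times.
-/

open scoped Topology ENNReal BoundedContinuousFunction

theorem card_Icc_neg_natCast (N : ℕ) : (Finset.Icc (-(N : ℤ)) N).card = 2 * N + 1 := by
  rw [Int.card_Icc]
  lia

/-- The uniform probability measure on the interval `{-N, …, N}` of integers, whose value at `Λ` is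
the quotient appearing in `upperDensity Λ`. -/
noncomputable def intervalMeasure (N : ℕ) : ProbabilityMeasure ℤ :=
  ⟨(2 * N + 1 : ℝ≥0∞)⁻¹ • ∑ n ∈ Finset.Icc (-(N : ℤ)) N, Measure.dirac n, ⟨by
    simpa [-Int.card_Icc, card_Icc_neg_natCast] using
      ENNReal.inv_mul_cancel (a := 2 * N + 1) (by simp) (by finiteness)⟩⟩

theorem intervalMeasure_real_apply (N : ℕ) (Λ : Set ℤ) [DecidablePred (· ∈ Λ)] :
    (intervalMeasure N : Measure ℤ).real Λ =
      (((Finset.Icc (-(N : ℤ)) N).filter (· ∈ Λ)).card : ℝ) / (2 * N + 1) := by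
  simp [intervalMeasure, Measure.real, Set.indicator_apply, div_eq_inv_mul, ENNReal.toReal_add,
    ENNReal.mul_eq_top]

theorem ofReal_upperDensity (Λ : Set ℤ) :
    ENNReal.ofReal (upperDensity Λ) =
      limsup (fun N ↦ (intervalMeasure N : Measure ℤ) Λ) atTop := by
  classical
  rw [← ENNReal.ofReal_limsup_toReal (C := 1) (.of_forall fun _ ↦ prob_le_one)]
  unfold upperDensity
  congr! 3
  exact (intervalMeasure_real_apply _ Λ).symm

section AsymptoticInvariance

variable {E : Type*} [NormedAddCommGroup E] [NormedSpace ℝ E] [CompleteSpace E]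

theorem integral_intervalMeasure (N : ℕ) (g : ℤ → E) :
    ∫ n, g n ∂(intervalMeasure N : Measure ℤ) =
      (2 * N + 1 : ℝ)⁻¹ • ∑ n ∈ Finset.Icc (-(N : ℤ)) N, g n := by
  simp [intervalMeasure, integral_finsetSum_measure, integrable_dirac, ENNReal.toReal_add,
    ENNReal.mul_eq_top]

theorem integral_intervalMeasure_sub_comp_add_one (N : ℕ) (g : ℤ → E) :
    ∫ n, g n ∂(intervalMeasure N : Measure ℤ) - ∫ n, g (n + 1) ∂(intervalMeasure N : Measure ℤ) =
      (2 * N + 1 : ℝ)⁻¹ • (g (-N) - g (N + 1)) := by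
  rw [integral_intervalMeasure, integral_intervalMeasure, ← smul_sub, ← Finset.sum_sub_distrib,
    Finset.sum_Icc_eq_sum_Ico_add _ (by lia), Finset.sum_Ico_int_sub, sub_add_sub_cancel]

theorem tendsto_integral_intervalMeasure_sub_comp_add_one {g : ℤ → E} {C : ℝ}
    (hg : ∀ n, ‖g n‖ ≤ C) :
    Tendsto (fun N ↦ ∫ n, g n ∂(intervalMeasure N : Measure ℤ) -
      ∫ n, g (n + 1) ∂(intervalMeasure N : Measure ℤ)) atTop (𝓝 0) := by
  have hinv : Tendsto (fun N : ℕ ↦ (2 * N + 1 : ℝ)⁻¹) atTop (𝓝 0) :=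
    tendsto_inv_atTop_zero.comp <| tendsto_atTop_add_const_right _ _ <|
      tendsto_natCast_atTop_atTop.const_mul_atTop two_pos
  simp only [integral_intervalMeasure_sub_comp_add_one]
  refine hinv.zero_smul_isBoundedUnder_le <| isBoundedUnder_of ⟨C + C, fun N ↦ ?_⟩
  exact (norm_sub_le _ _).trans (add_le_add (hg _) (hg _))

end AsymptoticInvariance

section WeakLimit

variable {X : Type*} [MeasurableSpace X]

/-- The uniform probability measure on the points `x n` with `|n| ≤ N`, counted with
multiplicity. -/
noncomputable def empiricalMeasure (x : ℤ → X) (N : ℕ) : ProbabilityMeasure X :=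
  (intervalMeasure N).map (measurable_of_countable x).aemeasurable

theorem empiricalMeasure_apply (x : ℤ → X) (N : ℕ) {s : Set X} (hs : MeasurableSet s) :
    (empiricalMeasure x N : Measure X) s = (intervalMeasure N : Measure ℤ) (x ⁻¹' s) :=
  Measure.map_apply (measurable_of_countable x) hs

theorem measure_le_upperDensity_of_tendsto_empiricalMeasure [TopologicalSpace X]
    [OpensMeasurableSpace X] [HasOuterApproxClosed X] {F : Filter ℕ} [F.NeBot]
    (hF : F ≤ atTop) {x : ℤ → X} {μ : ProbabilityMeasure X}
    (hμ : Tendsto (empiricalMeasure x) F (𝓝 μ)) {U : Set X} (hU : IsOpen U) :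
    (μ : Measure X) U ≤ ENNReal.ofReal (upperDensity (x ⁻¹' U)) :=
  calc (μ : Measure X) U
    _ ≤ liminf (fun N ↦ (empiricalMeasure x N : Measure X) U) F :=
      ProbabilityMeasure.le_liminf_measure_open_of_tendsto hμ hU
    _ = liminf (fun N ↦ (intervalMeasure N : Measure ℤ) (x ⁻¹' U)) F := by
      simp only [empiricalMeasure_apply x _ hU.measurableSet]
    _ ≤ limsup (fun N ↦ (intervalMeasure N : Measure ℤ) (x ⁻¹' U)) F := liminf_le_limsup
    _ ≤ limsup (fun N ↦ (intervalMeasure N : Measure ℤ) (x ⁻¹' U)) atTop :=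
      limsup_le_limsup_of_le hF
    _ = ENNReal.ofReal (upperDensity (x ⁻¹' U)) := (ofReal_upperDensity _).symm

variable [TopologicalSpace X] [BorelSpace X] [HasOuterApproxClosed X] {T : X → X}

theorem measurePreserving_of_tendsto_integral_sub_comp {ι : Type*} {F : Filter ι} [F.NeBot]
    {ν : ι → ProbabilityMeasure X} {μ : ProbabilityMeasure X} (hT : Continuous T)
    (hν : Tendsto ν F (𝓝 μ))
    (hinv : ∀ f : X →ᵇ ℝ, Tendsto (fun i ↦ ∫ x, f x ∂(ν i : Measure X) -
      ∫ x, f (T x) ∂(ν i : Measure X)) F (𝓝 0)) :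
    MeasurePreserving T (μ : Measure X) μ := by
  refine ⟨hT.measurable, ?_⟩
  have : IsProbabilityMeasure ((μ : Measure X).map T) :=
    Measure.isProbabilityMeasure_map hT.aemeasurable
  refine ext_of_forall_integral_eq_of_IsFiniteMeasure fun f ↦ ?_
  rw [integral_map hT.aemeasurable f.continuous.aestronglyMeasurable]
  have hlim := ProbabilityMeasure.tendsto_iff_forall_integral_tendsto.1 hν
  exact (sub_eq_zero.1 <| tendsto_nhds_unique
    ((hlim f).sub (hlim (f.compContinuous ⟨T, hT⟩))) (hinv f)).symm

theorem measurePreserving_of_tendsto_empiricalMeasure {F : Filter ℕ} [F.NeBot] (hF : F ≤ atTop)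
    {x : ℤ → X} {μ : ProbabilityMeasure X} (hT : Continuous T) (hx : ∀ n, T (x n) = x (n + 1))
    (hμ : Tendsto (empiricalMeasure x) F (𝓝 μ)) :
    MeasurePreserving T (μ : Measure X) μ := by
  refine measurePreserving_of_tendsto_integral_sub_comp hT hμ fun f ↦ ?_
  have hmap (g : X →ᵇ ℝ) (N : ℕ) : ∫ y, g y ∂(empiricalMeasure x N : Measure X) =
      ∫ n, g (x n) ∂(intervalMeasure N : Measure ℤ) :=
    integral_map (measurable_of_countable x).aemeasurable g.continuous.aestronglyMeasurable
  have hmapT (N : ℕ) : ∫ y, f (T y) ∂(empiricalMeasure x N : Measure X) =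
      ∫ n, f (x (n + 1)) ∂(intervalMeasure N : Measure ℤ) := by
    simpa only [BoundedContinuousFunction.compContinuous_apply, ContinuousMap.coe_mk, hx] using
      hmap (f.compContinuous ⟨T, hT⟩) N
  simp only [hmap, hmapT]
  exact (tendsto_integral_intervalMeasure_sub_comp_add_one fun n ↦
    f.norm_coe_le_norm (x n)).mono_left hF

theorem exists_measurePreserving_upperDensity_le [CompactSpace X] [T2Space X] {x : ℤ → X}
    (hT : Continuous T) (hx : ∀ n, T (x n) = x (n + 1)) {A : Set X} (hA : IsClosed A) :
    ∃ μ : ProbabilityMeasure X, MeasurePreserving T (μ : Measure X) μ ∧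
      ENNReal.ofReal (upperDensity (x ⁻¹' A)) ≤ (μ : Measure X) A ∧
      ∀ U : Set X, IsOpen U → (μ : Measure X) U ≤ ENNReal.ofReal (upperDensity (x ⁻¹' U)) := by
  obtain ⟨F, hF, hFA⟩ := mapClusterPt_iff_ultrafilter.1 <|
    (isGreatest_mapClusterPt_limsup (f := atTop)
      (u := fun N ↦ (intervalMeasure N : Measure ℤ) (x ⁻¹' A))).1
  obtain ⟨μ, -, hμ⟩ := isCompact_univ.ultrafilter_le_nhds (F.map (empiricalMeasure x)) (by simp)
  replace hμ : Tendsto (empiricalMeasure x) F (𝓝 μ) := hμ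
  refine ⟨μ, measurePreserving_of_tendsto_empiricalMeasure hF hT hx hμ, ?_,
    fun U hU ↦ measure_le_upperDensity_of_tendsto_empiricalMeasure hF hμ hU⟩
  calc ENNReal.ofReal (upperDensity (x ⁻¹' A))
    _ = limsup (fun N ↦ (intervalMeasure N : Measure ℤ) (x ⁻¹' A)) F := by
      rw [ofReal_upperDensity, hFA.limsup_eq]
    _ = limsup (fun N ↦ (empiricalMeasure x N : Measure X) A) F := by
      simp only [empiricalMeasure_apply x _ hA.measurableSet]
    _ ≤ (μ : Measure X) A := ProbabilityMeasure.limsup_measure_closed_le_of_tendsto hμ hA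

end WeakLimit

section Shift

variable (α : Type*) [TopologicalSpace α]

/-- The left shift on two-sided sequences with values in `α`. -/
@[simps]
def shiftHomeomorph : (ℤ → α) ≃ₜ (ℤ → α) where
  toFun ω n := ω (n + 1)
  invFun ω n := ω (n - 1)
  left_inv ω := by simp
  right_inv ω := by simp

variable {α}

theorem shiftHomeomorph_zpow_apply (m : ℤ) (ω : ℤ → α) (n : ℤ) :
    ((shiftHomeomorph α).toEquiv ^ m) ω n = ω (n + m) := by
  induction m generalizing ω with
  | zero => simp
  | succ k ih =>
    rw [zpow_add_one, Equiv.Perm.mul_apply, ih, Homeomorph.coe_toEquiv, shiftHomeomorph_apply,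
      add_assoc]
  | pred k ih =>
    rw [zpow_sub_one, Equiv.Perm.mul_apply, ih, Equiv.Perm.inv_def, Homeomorph.coe_symm_toEquiv,
      shiftHomeomorph_symm_apply, add_sub_assoc]

theorem continuous_shiftHomeomorph_zpow (m : ℤ) :
    Continuous ((shiftHomeomorph α).toEquiv ^ m) :=
  continuous_pi fun n ↦ by simpa only [shiftHomeomorph_zpow_apply] using continuous_apply (n + m)

end Shift

/-- Furstenberg's correspondence principle (Bergelson's formulation). -/
theorem statement19 (Λ : Set ℤ) :
    ∃ (X : Type) (_ : MeasurableSpace X) (μ : Measure X) (T : X ≃ᵐ X) (A : Set X),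
      IsProbabilityMeasure μ ∧ MeasurePreserving (⇑T) μ μ ∧ MeasurableSet A ∧
      μ A = ENNReal.ofReal (upperDensity Λ) ∧
      ∀ (ℓ : ℕ) (n : Fin ℓ → ℤ),
        μ (A ∩ ⋂ i, (⇑(T.toEquiv ^ (n i))) ⁻¹' A) ≤
          ENNReal.ofReal (upperDensity (Λ ∩ ⋂ i, {x : ℤ | x + n i ∈ Λ})) := by
  classical
  let x : ℤ → ℤ → Bool := fun n m ↦ decide (m + n ∈ Λ)
  let A : Set (ℤ → Bool) := {ω | ω 0 = true}
  have hx (n : ℤ) : shiftHomeomorph Bool (x n) = x (n + 1) := by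
    ext m
    simp [x, add_assoc, add_comm 1 n]
  have hA : IsClopen A := (isClopen_discrete {true}).preimage (continuous_apply 0)
  have hxA : x ⁻¹' A = Λ := by ext; simp [x, A]
  obtain ⟨μ, hμT, hμA, hμU⟩ := exists_measurePreserving_upperDensity_le
    (shiftHomeomorph Bool).continuous hx hA.isClosed
  refine ⟨ℤ → Bool, inferInstance, μ, (shiftHomeomorph Bool).toMeasurableEquiv, A, inferInstance,
    hμT, hA.isOpen.measurableSet, hxA ▸ (hμU A hA.isOpen).antisymm hμA, fun ℓ n ↦ ?_⟩
  let U : Set (ℤ → Bool) := A ∩ ⋂ i, ((shiftHomeomorph Bool).toEquiv ^ n i) ⁻¹' A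
  have hU : IsOpen U := hA.isOpen.inter <| isOpen_iInter_of_finite fun i ↦
    hA.isOpen.preimage (continuous_shiftHomeomorph_zpow (n i))
  have hxU : x ⁻¹' U = Λ ∩ ⋂ i, {m : ℤ | m + n i ∈ Λ} := by
    ext m
    simp [x, A, U, shiftHomeomorph_zpow_apply, add_comm m]
  exact hxU ▸ hμU U hU
end
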